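/- Let N, M, S be positive integers with M ≥ 2, N ≥ 2, M·S ≤ N and S | N, and let c₁ be a real number with 2Nc₁ ∈ ℤ. Define T₁(τ,ν) = (1/N²)·D_M(Sτ/N)·D_N((2Nc₁τ − ν)/N) for integers τ, ν. Then T₁(τ,ν) ≤ M² for all integers τ, ν, and T₁(τ,ν) = M² if and only if there exist integers m and k such that τ = m·N/S and ν = 2N²c₁m/S − kN. In particular, all maximizers (τ*, ν*) of T₁ are given by (τ*, ν*) = (mN/S, 2N²c₁m/S − kN) with m, k ∈ ℤ. -/

import Mathlib

/-!
At an integer the kernel `dirD L` equals `L ^ 2`. At a non-integer `x` and for `L ≥ 2` it is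
strictly smaller, because `|sin (L y)| < L |sin y|` whenever `sin y ≠ 0` (induction on `L` with
the addition formula, starting from `|cos y| < 1`). If moreover `L x` is an integer, it vanishes.

Since `2 N c₁` is an integer, the argument of the factor `dirD N` is an integer divided by `N`,
so this factor is `N ^ 2` or `0`. Hence the product is `dirD M (S τ / N) ≤ M ^ 2` or `0`, and it
equals `M ^ 2` exactly when both arguments are integers `m` and `k`; solving
`S τ / N = m` and `(2 N c₁ τ - ν) / N = k` for `τ` and `ν` gives the stated lattice.
-/

open MeasureTheory ProbabilityTheory Finset Matrix

open Classical in
/-- Dirichlet-type kernel `S_L(x) = sin(πLx)/sin(πx)` for non-integer `x`,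
extended by `S_L(k) = (−1)^{k(L−1)}·L` at integers `k`. -/
noncomputable def dirS (L : ℕ) (x : ℝ) : ℝ :=
  if h : ∃ k : ℤ, x = (k : ℝ) then
    (-1 : ℝ) ^ (h.choose * ((L : ℤ) - 1)) * L
  else Real.sin (Real.pi * L * x) / Real.sin (Real.pi * x)

/-- `D_L(x) = |S_L(x)|²`. -/
noncomputable def dirD (L : ℕ) (x : ℝ) : ℝ := (dirS L x) ^ 2

/-- DAFT-s-AFDM chirp basis function
`g_m[n] = (1/√(NM))·e^{i2π(c₁n²−λ₁m²)}·Σ_{l<M} e^{i2π(Δλ·l² + (Sn/N − m/M)l)}`. -/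
noncomputable def chirpBasis (N M S : ℕ) (c₁ lam₁ dl : ℝ) (m : ℕ) (n : ℤ) : ℂ :=
  ((1 / Real.sqrt (N * M) : ℝ) : ℂ) *
    Complex.exp (Complex.I * (2 * Real.pi) *
      ((c₁ : ℂ) * (n : ℂ) ^ 2 - (lam₁ : ℂ) * (m : ℂ) ^ 2)) *
    ∑ l ∈ Finset.range M, Complex.exp (Complex.I * (2 * Real.pi) *
      ((dl : ℂ) * (l : ℂ) ^ 2 + ((S : ℂ) * (n : ℂ) / (N : ℂ) - (m : ℂ) / (M : ℂ)) * (l : ℂ)))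

/-- Periodic cross-ambiguity function
`A^P_{m,p}(τ,ν) = Σ_{n<N} g_m[n]·conj(g_p[(n−τ) mod N])·e^{−i2πνn/N}`. -/
noncomputable def crossAFP (N M S : ℕ) (c₁ lam₁ dl : ℝ) (τ : ℤ) (ν : ℝ) (m p : ℕ) : ℂ :=
  ∑ n ∈ Finset.range N,
    chirpBasis N M S c₁ lam₁ dl m (n : ℤ) *
      (starRingEnd ℂ) (chirpBasis N M S c₁ lam₁ dl p (((n : ℤ) - τ) % (N : ℤ))) *
      Complex.exp (-Complex.I * (2 * Real.pi) * (ν : ℂ) * (n : ℂ) / (N : ℂ))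

/-- Aperiodic cross-ambiguity function: for `0 ≤ τ < N` the sum runs over
`n = τ,…,N−1`, and for `−N < τ < 0` over `n = 0,…,N−1−|τ|`. -/
noncomputable def crossAFA (N M S : ℕ) (c₁ lam₁ dl : ℝ) (τ : ℤ) (ν : ℝ) (m p : ℕ) : ℂ :=
  ∑ n ∈ Finset.Icc (max 0 τ) ((N : ℤ) - 1 + min 0 τ),
    chirpBasis N M S c₁ lam₁ dl m n *
      (starRingEnd ℂ) (chirpBasis N M S c₁ lam₁ dl p (n - τ)) *
      Complex.exp (-Complex.I * (2 * Real.pi) * (ν : ℂ) * (n : ℂ) / (N : ℂ))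

/-- Transmitted DAFT-s-AFDM samples `s[n] = Σ_m x_m g_m[n]`. -/
noncomputable def txSig (N M S : ℕ) (c₁ lam₁ dl : ℝ) (x : Fin M → ℂ) (n : ℤ) : ℂ :=
  ∑ m : Fin M, x m * chirpBasis N M S c₁ lam₁ dl (m : ℕ) n

/-- Discrete periodic ambiguity function of the transmitted signal. -/
noncomputable def chiP (N M S : ℕ) (c₁ lam₁ dl : ℝ) (x : Fin M → ℂ) (τ : ℤ) (ν : ℝ) : ℂ :=
  ∑ n ∈ Finset.range N,
    txSig N M S c₁ lam₁ dl x (n : ℤ) *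
      (starRingEnd ℂ) (txSig N M S c₁ lam₁ dl x (((n : ℤ) - τ) % (N : ℤ))) *
      Complex.exp (-Complex.I * (2 * Real.pi) * (ν : ℂ) * (n : ℂ) / (N : ℂ))

/-- Discrete aperiodic ambiguity function of the transmitted signal. -/
noncomputable def chiA (N M S : ℕ) (c₁ lam₁ dl : ℝ) (x : Fin M → ℂ) (τ : ℤ) (ν : ℝ) : ℂ :=
  ∑ n ∈ Finset.Icc (max 0 τ) ((N : ℤ) - 1 + min 0 τ),
    txSig N M S c₁ lam₁ dl x n *
      (starRingEnd ℂ) (txSig N M S c₁ lam₁ dl x (n - τ)) *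
      Complex.exp (-Complex.I * (2 * Real.pi) * (ν : ℂ) * (n : ℂ) / (N : ℂ))

lemma dirD_of_int (L : ℕ) {x : ℝ} (h : ∃ k : ℤ, x = (k : ℝ)) : dirD L x = (L : ℝ) ^ 2 := by
  unfold dirD dirS
  rw [dif_pos h, mul_pow, ← zpow_natCast, ← _root_.zpow_mul, mul_comm _ ((2 : ℕ) : ℤ),
    _root_.zpow_mul]
  norm_num

lemma sin_pi_mul_ne_zero_of_not_int {x : ℝ} (h : ¬ ∃ k : ℤ, x = (k : ℝ)) : Real.sin (Real.pi * x) ≠ 0 := by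
  intro h0
  obtain ⟨n, hn⟩ := Real.sin_eq_zero_iff.1 h0
  refine h ⟨n, ?_⟩
  have hpi := Real.pi_ne_zero
  apply mul_left_cancel₀ hpi
  linarith

lemma abs_sin_nat_mul_lt {y : ℝ} (hy : Real.sin y ≠ 0) (L : ℕ) (hL : 2 ≤ L) :
    |Real.sin (L * y)| < L * |Real.sin y| := by
  have hpos : 0 < |Real.sin y| := abs_pos.2 hy
  induction L, hL using Nat.le_induction with
  | base =>
    have hc : |Real.cos y| < 1 := by
      rw [← sq_lt_one_iff_abs_lt_one]
      have h1 := Real.sin_sq_add_cos_sq y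
      have h2 : 0 < Real.sin y ^ 2 := by positivity
      linarith
    push_cast
    rw [Real.sin_two_mul, abs_mul, abs_mul, abs_two]
    nlinarith
  | succ L hL ih =>
    push_cast
    rw [add_mul, one_mul, Real.sin_add]
    have h1 : |Real.sin (L * y) * Real.cos y| ≤ |Real.sin (L * y)| := by
      rw [abs_mul]
      exact mul_le_of_le_one_right (abs_nonneg _) (Real.abs_cos_le_one y)
    have h2 : |Real.cos (L * y) * Real.sin y| ≤ |Real.sin y| := by
      rw [abs_mul]
      exact mul_le_of_le_one_left (abs_nonneg _) (Real.abs_cos_le_one _)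
    have h3 := abs_add_le (Real.sin (L * y) * Real.cos y) (Real.cos (L * y) * Real.sin y)
    linarith

lemma dirD_lt_of_not_int {L : ℕ} (hL : 2 ≤ L) {x : ℝ} (h : ¬ ∃ k : ℤ, x = (k : ℝ)) :
    dirD L x < (L : ℝ) ^ 2 := by
  unfold dirD dirS
  rw [dif_neg h]
  have hs := sin_pi_mul_ne_zero_of_not_int h
  have hlt := abs_sin_nat_mul_lt hs L hL
  rw [show Real.pi * L * x = L * (Real.pi * x) by ring, sq_lt_sq, abs_div, Nat.abs_cast,
    div_lt_iff₀ (abs_pos.2 hs)]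
  exact hlt

lemma dirD_le {L : ℕ} (hL : 2 ≤ L) (x : ℝ) : dirD L x ≤ (L : ℝ) ^ 2 := by
  by_cases h : ∃ k : ℤ, x = (k : ℝ)
  · exact (dirD_of_int L h).le
  · exact (dirD_lt_of_not_int hL h).le

lemma dirD_eq_iff {L : ℕ} (hL : 2 ≤ L) (x : ℝ) :
    dirD L x = (L : ℝ) ^ 2 ↔ ∃ k : ℤ, x = (k : ℝ) := by
  refine ⟨fun h => ?_, dirD_of_int L⟩
  by_contra hx
  exact (dirD_lt_of_not_int hL hx).ne h

lemma dirD_int_div_eq_zero {L : ℕ} (hL : L ≠ 0) (b : ℤ) (h : ¬ ∃ k : ℤ, (b : ℝ) / L = (k : ℝ)) :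
    dirD L ((b : ℝ) / L) = 0 := by
  unfold dirD dirS
  have hL' : (L : ℝ) ≠ 0 := by exact_mod_cast hL
  rw [dif_neg h, show Real.pi * L * ((b : ℝ) / L) = b * Real.pi by field_simp, Real.sin_int_mul_pi]
  simp

/-- Proposition 4. For `M,N ≥ 2`, `M·S ≤ N`, `S ∣ N` and
`2Nc₁ ∈ ℤ`, the coherent term `T₁(τ,ν) = (1/N²)·D_M(Sτ/N)·D_N((2Nc₁τ−ν)/N)` on
integer `(τ,ν)` satisfies `T₁ ≤ M²`, with equality exactly at
`(τ,ν) = (mN/S, 2N²c₁m/S − kN)`, `m,k ∈ ℤ`. -/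
theorem stmt_9 (N M S : ℕ) (hM : 2 ≤ M) (hN : 2 ≤ N) (hS : 0 < S)
    (hMS : M * S ≤ N) (hSN : S ∣ N)
    (c₁ : ℝ) (h2Nc₁ : ∃ a : ℤ, 2 * (N : ℝ) * c₁ = a) :
    ∀ τ ν : ℤ,
      (1 / (N : ℝ) ^ 2 * dirD M ((S : ℝ) * (τ : ℝ) / N)
          * dirD N ((2 * (N : ℝ) * c₁ * (τ : ℝ) - (ν : ℝ)) / N) ≤ (M : ℝ) ^ 2)
      ∧ (1 / (N : ℝ) ^ 2 * dirD M ((S : ℝ) * (τ : ℝ) / N)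
            * dirD N ((2 * (N : ℝ) * c₁ * (τ : ℝ) - (ν : ℝ)) / N) = (M : ℝ) ^ 2
          ↔ ∃ m k : ℤ, (τ : ℝ) = (m : ℝ) * N / S
              ∧ (ν : ℝ) = 2 * (N : ℝ) ^ 2 * c₁ * (m : ℝ) / S - (k : ℝ) * N) := by
  intro τ ν
  obtain ⟨a, ha⟩ := h2Nc₁
  have hN0 : (N : ℝ) ≠ 0 := by positivity
  have hS0 : (S : ℝ) ≠ 0 := by positivity
  have hM0 : (0 : ℝ) < (M : ℝ) ^ 2 := by positivity
  -- The lattice condition says that both kernel arguments are integers.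
  have hlat : (∃ m k : ℤ, (τ : ℝ) = (m : ℝ) * N / S
        ∧ (ν : ℝ) = 2 * (N : ℝ) ^ 2 * c₁ * (m : ℝ) / S - (k : ℝ) * N) ↔
      (∃ m : ℤ, (S : ℝ) * (τ : ℝ) / N = m) ∧
        ∃ k : ℤ, (2 * (N : ℝ) * c₁ * (τ : ℝ) - (ν : ℝ)) / N = k := by
    constructor
    · rintro ⟨m, k, h1, h2⟩
      refine ⟨⟨m, ?_⟩, k, ?_⟩
      · rw [h1]; field_simp
      · rw [h1, h2]; field_simp; ring
    · rintro ⟨⟨m, h1⟩, k, h2⟩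
      have h1' : (τ : ℝ) = (m : ℝ) * N / S := by
        rw [← h1]; field_simp
      refine ⟨m, k, h1', ?_⟩
      rw [div_eq_iff hN0, h1'] at h2
      rw [← h2]; field_simp; ring
  rw [hlat]
  by_cases hk : ∃ k : ℤ, (2 * (N : ℝ) * c₁ * (τ : ℝ) - (ν : ℝ)) / N = k
  · have hT : 1 / (N : ℝ) ^ 2 * dirD M ((S : ℝ) * (τ : ℝ) / N)
          * dirD N ((2 * (N : ℝ) * c₁ * (τ : ℝ) - (ν : ℝ)) / N)
        = dirD M ((S : ℝ) * (τ : ℝ) / N) := by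
      rw [dirD_of_int N hk]; field_simp
    rw [hT, dirD_eq_iff hM]
    exact ⟨dirD_le hM _, fun h => ⟨h, hk⟩, fun h => h.1⟩
  · have hz : dirD N ((2 * (N : ℝ) * c₁ * (τ : ℝ) - (ν : ℝ)) / N) = 0 := by
      have hb : 2 * (N : ℝ) * c₁ * (τ : ℝ) - (ν : ℝ) = ((a * τ - ν : ℤ) : ℝ) := by
        rw [ha]; push_cast; ring
      rw [hb] at hk ⊢
      exact dirD_int_div_eq_zero (by omega) _ hk
    rw [hz, mul_zero]
    exact ⟨hM0.le, fun h => absurd h hM0.ne, fun h => absurd h.2 hk⟩
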